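/- arXiv:1101.4698 — 3 statements merged into one kernel-verified Lean document; each statement's English description precedes it below -/
import Mathlib

section
/- For every real number t with 0 < t < 8/7, the inequality ψ(t) − ψ(2t^2/((1+2t)·ln(1+2t))) < 1 holds. -/
/-!
Write `u = 2t` and `s = 2t² / ((1 + 2t) log (1 + 2t))`. Since `digamma` is increasing on `(0, ∞)`
(`Γ` is log-convex), it suffices to replace `s` by a smaller number. The `[3/2]` Padé approximant
of `log (1 + u)` is an upper bound for it (`log_one_add_le_pade`), which gives a rational lower
bound `s₀ ≤ s` with `s₀ ≤ t ≤ s₀ + 1`.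

The recurrence `digamma (x + 1) = digamma x + 1 / x` gives
`digamma t - digamma s₀ = 1 / s₀ - 1 / t + (digamma (t + 1) - digamma (s₀ + 1))`, and the last
difference is at most `2 (t - s₀) / (t + s₀ + 1)` by `digamma_sub_le`, which compares the series
`∑ (x - y) / ((x + n) (y + n))` for `digamma x - digamma y` with a telescoping one. What remains is
a rational inequality in `u` on `(0, 16/7)`, i.e. positivity of
`1200 + 2280 u + 1168 u² - 38 u³ - 130 u⁴ - 22 u⁵` there.
-/

open Real

/-- The digamma function `ψ = Γ′/Γ`. -/
noncomputable def digamma (x : ℝ) : ℝ := deriv Real.Gamma x / Real.Gamma x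

lemma differentiableAt_Gamma_of_pos {x : ℝ} (hx : 0 < x) : DifferentiableAt ℝ Real.Gamma x :=
  Real.differentiableAt_Gamma fun m => by
    have : (0 : ℝ) ≤ m := m.cast_nonneg
    linarith

lemma digamma_add_one {x : ℝ} (hx : 0 < x) : digamma (x + 1) = digamma x + 1 / x := by
  have hG := Real.Gamma_pos_of_pos hx
  have hshift : HasDerivAt (fun y => Real.Gamma (y + 1)) (deriv Real.Gamma (x + 1)) x :=
    HasDerivAt.comp_add_const x 1
      (differentiableAt_Gamma_of_pos (by linarith : 0 < x + 1)).hasDerivAt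
  have hmul : HasDerivAt (fun y => y * Real.Gamma y)
      (1 * Real.Gamma x + x * deriv Real.Gamma x) x :=
    (hasDerivAt_id x).mul (differentiableAt_Gamma_of_pos hx).hasDerivAt
  have heq : (fun y => Real.Gamma (y + 1)) =ᶠ[nhds x] fun y => y * Real.Gamma y := by
    filter_upwards [lt_mem_nhds hx] with y hy using Real.Gamma_add_one hy.ne'
  have hd := hshift.unique (hmul.congr_of_eventuallyEq heq)
  unfold digamma
  rw [hd, Real.Gamma_add_one hx.ne']
  field_simp
  ring

lemma digamma_monotoneOn : MonotoneOn digamma (Set.Ioi 0) := by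
  have hderiv : ∀ x ∈ Set.Ioi (0 : ℝ), HasDerivAt (Real.log ∘ Real.Gamma) (digamma x) x := by
    intro x hx
    exact (differentiableAt_Gamma_of_pos hx).hasDerivAt.log (Real.Gamma_pos_of_pos hx).ne'
  have h := Real.convexOn_log_Gamma.monotoneOn_deriv
    (fun x hx => (hderiv x hx).differentiableAt)
  intro x hx y hy hxy
  have := h hx hy hxy
  rwa [(hderiv x hx).deriv, (hderiv y hy).deriv] at this

/-- Comparison with a telescoping series: `(x + n) (y + n)` is the square of `n + (x + y) / 2` minus
`((x - y) / 2) ^ 2 ≤ 1 / 4`, so each term of `digamma x - digamma y` is at most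
`(x - y) / ((n + m - 1 / 2) (n + m + 1 / 2))` with `m = (x + y) / 2`. The tails vanish because
`digamma (x + k) - digamma (y + k) ≤ digamma (y + k + 1) - digamma (y + k) = 1 / (y + k)`. -/
lemma digamma_sub_le {x y : ℝ} (hy : 0 < y) (hyx : y ≤ x) (hxy : x ≤ y + 1)
    (hsum : 1 < x + y) : digamma x - digamma y ≤ 2 * (x - y) / (x + y - 1) := by
  have hstep : ∀ k : ℕ, digamma x - digamma y - 2 * (x - y) / (x + y - 1) ≤
      digamma (x + k) - digamma (y + k) - 2 * (x - y) / (x + y - 1 + 2 * k) := by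
    intro k
    induction k with
    | zero => simp
    | succ k ih =>
      refine ih.trans ?_
      have hk : (0 : ℝ) ≤ k := k.cast_nonneg
      have hx0 : 0 < x + k := by linarith
      have hy0 : 0 < y + k := by linarith
      push_cast
      rw [← add_assoc, ← add_assoc, digamma_add_one hx0, digamma_add_one hy0]
      have hm : 0 < x + y - 1 + 2 * k := by linarith
      have hm' : 0 < x + y - 1 + 2 * (k + 1) := by linarith
      have e1 : 1 / (y + k) - 1 / (x + k) = (x - y) * (1 / ((x + k) * (y + k))) := by
        field_simp
        ring
      have e2 : 2 * (x - y) / (x + y - 1 + 2 * k) - 2 * (x - y) / (x + y - 1 + 2 * (k + 1)) =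
          (x - y) * (4 / ((x + y - 1 + 2 * k) * (x + y - 1 + 2 * (k + 1)))) := by
        field_simp
        ring
      -- `4 (x + k) (y + k) = (x + y + 2 k)² - (x - y)²`, and `(x - y)² ≤ 1`.
      have e3 : 1 / ((x + k) * (y + k)) ≤
          4 / ((x + y - 1 + 2 * k) * (x + y - 1 + 2 * (k + 1))) := by
        rw [div_le_div_iff₀ (by positivity) (by positivity)]
        nlinarith
      have e4 := mul_le_mul_of_nonneg_left e3 (sub_nonneg.2 hyx)
      linarith
  have hbound : ∀ k : ℕ, digamma x - digamma y - 2 * (x - y) / (x + y - 1) ≤ 1 / (y + k) := by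
    intro k
    refine (hstep k).trans ?_
    have hk : (0 : ℝ) ≤ k := k.cast_nonneg
    have hy0 : 0 < y + k := by linarith
    have hmono : digamma (x + k) ≤ digamma (y + k + 1) :=
      digamma_monotoneOn (Set.mem_Ioi.2 (by linarith)) (Set.mem_Ioi.2 (by linarith)) (by linarith)
    rw [digamma_add_one hy0] at hmono
    have : 0 ≤ 2 * (x - y) / (x + y - 1 + 2 * k) :=
      div_nonneg (by linarith) (by linarith)
    linarith
  have hlim : Filter.Tendsto (fun k : ℕ => 1 / (y + (k : ℝ))) Filter.atTop (nhds 0) := by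
    simp only [one_div]
    exact (Filter.tendsto_atTop_add_const_left _ y tendsto_natCast_atTop_atTop).inv_tendsto_atTop
  have := ge_of_tendsto' hlim hbound
  linarith

/-- The `[3/2]` Padé approximant of `log (1 + u)` at `0` bounds it from above. -/
lemma log_one_add_le_pade {u : ℝ} (hu : 0 ≤ u) :
    Real.log (1 + u) ≤ u * (u ^ 2 + 21 * u + 30) / (3 * (3 * u ^ 2 + 12 * u + 10)) := by
  have hd : ∀ v : ℝ, 0 ≤ v → HasDerivAt
      (fun u : ℝ => u * (u ^ 2 + 21 * u + 30) / (3 * (3 * u ^ 2 + 12 * u + 10)) - Real.log (1 + u))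
      (v ^ 5 / ((3 * v ^ 2 + 12 * v + 10) ^ 2 * (1 + v))) v := by
    intro v hv
    have h1 : HasDerivAt (fun u : ℝ => u * (u ^ 2 + 21 * u + 30)) (3 * v ^ 2 + 42 * v + 30) v := by
      have := ((hasDerivAt_id v).mul
        ((((hasDerivAt_id v).pow 2).add ((hasDerivAt_id v).const_mul 21)).add_const 30))
      refine this.congr_deriv ?_
      simp
      ring
    have h2 : HasDerivAt (fun u : ℝ => 3 * (3 * u ^ 2 + 12 * u + 10)) (18 * v + 36) v := by
      have := (((((hasDerivAt_id v).pow 2).const_mul 3).add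
        ((hasDerivAt_id v).const_mul 12)).add_const 10).const_mul (3 : ℝ)
      refine this.congr_deriv ?_
      simp
      ring
    have h3 : HasDerivAt (fun u : ℝ => Real.log (1 + u)) (1 / (1 + v)) v :=
      ((hasDerivAt_id v).const_add 1).log (by simp; positivity)
    refine ((h1.div h2 (by positivity)).sub h3).congr_deriv ?_
    have : 0 < 3 * v ^ 2 + 12 * v + 10 := by positivity
    field_simp
    ring
  have hmono := monotoneOn_of_deriv_nonneg (convex_Ici (0 : ℝ))
    (fun v hv => (hd v hv).continuousAt.continuousWithinAt)
    (fun v hv => (hd v (interior_subset hv)).differentiableAt.differentiableWithinAt)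
    (fun v hv => by
      have hv0 : 0 ≤ v := interior_subset hv
      rw [(hd v hv0).deriv]
      positivity)
  have := hmono Set.self_mem_Ici (Set.mem_Ici.2 hu) hu
  simp at this
  linarith

/-- The rational inequality left after the two estimates; `u n / d` is the lower bound `s₀`
for the argument of the second `digamma`, and `u / 2` is `t`. -/
lemma rational_bound {u n d : ℝ} (hu : 0 < u) (hu' : u < 16 / 7)
    (hn : n = 9 * u ^ 2 + 36 * u + 30) (hd : d = 2 * (1 + u) * (u ^ 2 + 21 * u + 30)) :
    1 / (u * n / d) - 1 / (u / 2) + 2 * (u / 2 - u * n / d) / (u / 2 + u * n / d + 1) < 1 := by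
  have hn0 : 0 < n := by rw [hn]; positivity
  have hd0 : 0 < d := by rw [hd]; positivity
  have hdn : d - 2 * n = u * (2 * u ^ 2 + 26 * u + 30) := by rw [hn, hd]; ring
  have e1 : 1 / (u * n / d) - 1 / (u / 2) = (2 * u ^ 2 + 26 * u + 30) / n := by
    have : 1 / (u * n / d) - 1 / (u / 2) = (d - 2 * n) / (u * n) := by
      field_simp
    rw [this, hdn]
    field_simp
  have e2 : 2 * (u / 2 - u * n / d) / (u / 2 + u * n / d + 1) =
      2 * u ^ 2 * (2 * u ^ 2 + 26 * u + 30) / (u * d + 2 * u * n + 2 * d) := by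
    have : 2 * (u / 2 - u * n / d) / (u / 2 + u * n / d + 1) =
        2 * u * (d - 2 * n) / (u * d + 2 * u * n + 2 * d) := by
      field_simp
    rw [this, hdn]
    ring
  have hE : 0 < u * d + 2 * u * n + 2 * d := by positivity
  have hpoly : 0 < u * (1200 + 2280 * u + 1168 * u ^ 2 - 38 * u ^ 3 - 130 * u ^ 4 - 22 * u ^ 5) := by
    have h3 : u ^ 3 ≤ (16 / 7) * u ^ 2 := by nlinarith [sq_nonneg u]
    have h4 : u ^ 4 ≤ (16 / 7) ^ 2 * u ^ 2 := by nlinarith [sq_nonneg u]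
    have h5 : u ^ 5 ≤ (16 / 7) ^ 3 * u ^ 2 := by nlinarith [sq_nonneg u]
    apply mul_pos hu
    nlinarith [sq_nonneg u]
  rw [e1, e2, div_add_div _ _ hn0.ne' hE.ne', div_lt_one (by positivity)]
  rw [hn, hd]
  nlinarith

theorem stmt_14 (t : ℝ) (ht : 0 < t) (ht' : t < 8/7) :
    digamma t - digamma (2 * t ^ 2 / ((1 + 2 * t) * Real.log (1 + 2 * t))) < 1 := by
  obtain ⟨u, rfl⟩ : ∃ u, t = u / 2 := ⟨2 * t, by ring⟩
  have hu : 0 < u := by linarith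
  have hu' : u < 16 / 7 := by linarith
  have h2u : 2 * (u / 2) = u := by ring
  rw [h2u]
  obtain ⟨n, hn⟩ : ∃ n, n = 9 * u ^ 2 + 36 * u + 30 := ⟨_, rfl⟩
  obtain ⟨d, hd⟩ : ∃ d, d = 2 * (1 + u) * (u ^ 2 + 21 * u + 30) := ⟨_, rfl⟩
  have hn0 : 0 < n := by rw [hn]; positivity
  have hd0 : 0 < d := by rw [hd]; positivity
  have hfin := rational_bound hu hu' hn hd
  have hlog : 0 < Real.log (1 + u) := Real.log_pos (by linarith)
  have hs : u * n / d ≤ 2 * (u / 2) ^ 2 / ((1 + u) * Real.log (1 + u)) := by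
    have hpade := log_one_add_le_pade hu.le
    rw [show 3 * (3 * u ^ 2 + 12 * u + 10) = n by rw [hn]; ring, le_div_iff₀ hn0] at hpade
    rw [div_le_div_iff₀ hd0 (by positivity)]
    have := mul_le_mul_of_nonneg_left hpade (by positivity : 0 ≤ u * (1 + u))
    rw [hd]
    linarith
  have hle : u * n / d ≤ u / 2 := by
    rw [div_le_div_iff₀ hd0 two_pos, mul_assoc]
    refine mul_le_mul_of_nonneg_left ?_ hu.le
    have : 0 < u * (2 * u ^ 2 + 26 * u + 30) := by positivity
    rw [hn, hd]
    linarith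
  have hge : u / 2 ≤ u * n / d + 1 := by
    have : u / 2 - 1 ≤ u * n / d := by
      rw [le_div_iff₀ hd0]
      -- For `u ≥ 2`, `u / 2 - 1 < 1 / 7` since `u < 16 / 7`, while `u n / d ≥ 1 / 7`.
      rcases le_total u 2 with h | h
      · have : (u / 2 - 1) * d ≤ 0 := mul_nonpos_of_nonpos_of_nonneg (by linarith) hd0.le
        have : 0 < u * n := by positivity
        linarith
      · have h1 : (u / 2 - 1) * d ≤ 1 / 7 * d := mul_le_mul_of_nonneg_right (by linarith) hd0.le
        have h2 : d ≤ 7 * (u * n) := by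
          rw [hn, hd]
          nlinarith [mul_pos hu hu, pow_pos hu 3]
        linarith
    linarith
  have hs0 : 0 < u * n / d := by positivity
  have hmono : digamma (u * n / d) ≤ digamma (2 * (u / 2) ^ 2 / ((1 + u) * Real.log (1 + u))) :=
    digamma_monotoneOn (Set.mem_Ioi.2 hs0) (Set.mem_Ioi.2 (hs0.trans_le hs)) hs
  have hrest := digamma_sub_le (x := u / 2 + 1) (y := u * n / d + 1) (by linarith) (by linarith)
    (by linarith) (by linarith)
  rw [digamma_add_one ht, digamma_add_one hs0,
    show u / 2 + 1 - (u * n / d + 1) = u / 2 - u * n / d by ring,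
    show u / 2 + 1 + (u * n / d + 1) - 1 = u / 2 + u * n / d + 1 by ring] at hrest
  linarith
end

section
/- For every real number t with 0 < t < 8/7, the inequality √(12t^2(t+1)/(t^2+6t+3)) ≥ (3t^3 + 11t^2 + 3t − 3)/(t^2 + 6t + 3) holds. -/
/-!
For `t ≤ 1/3` the right-hand side is nonpositive. For `1/3 ≤ t ≤ 8/7` it suffices to compare
squares, which reduces to the nonnegativity of a sextic polynomial on that interval
(`sq_diff_nonneg`).
-/

/-- The difference of the squares of the two sides, after clearing denominators, is positive on
`[1/3, 8/7]`. The products of `t - 1/3` and `8/7 - t` are the Bernstein basis of that interval, in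
which the polynomial has positive coefficients. -/
lemma sq_diff_nonneg (t : ℝ) (h1 : 1 / 3 ≤ t) (h2 : t ≤ 8 / 7) :
    0 ≤ -9 * t ^ 6 - 54 * t ^ 5 - 55 * t ^ 4 + 60 * t ^ 3 + 93 * t ^ 2 + 18 * t - 9 := by
  have ha : 0 ≤ t - 1 / 3 := by linarith
  have hb : 0 ≤ 8 / 7 - t := by linarith
  linarith [pow_nonneg ha 6, mul_nonneg (pow_nonneg ha 5) hb,
    mul_nonneg (pow_nonneg ha 4) (pow_nonneg hb 2),
    mul_nonneg (pow_nonneg ha 3) (pow_nonneg hb 3),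
    mul_nonneg (pow_nonneg ha 2) (pow_nonneg hb 4),
    mul_nonneg ha (pow_nonneg hb 5), pow_nonneg hb 6]

theorem stmt_16 (t : ℝ) (ht : 0 < t) (ht' : t < 8/7) :
    Real.sqrt (12 * t ^ 2 * (t + 1) / (t ^ 2 + 6 * t + 3)) ≥
      (3 * t ^ 3 + 11 * t ^ 2 + 3 * t - 3) / (t ^ 2 + 6 * t + 3) := by
  have hD : 0 < t ^ 2 + 6 * t + 3 := by positivity
  rcases le_total t (1 / 3) with h | h
  -- For `t ≤ 1/3` the numerator on the right is nonpositive.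
  · refine le_trans (div_nonpos_of_nonpos_of_nonneg ?_ hD.le) (Real.sqrt_nonneg _)
    have h2 : t ^ 2 ≤ (1 / 3) ^ 2 := by gcongr
    have h3 : t ^ 3 ≤ (1 / 3) ^ 3 := by gcongr
    linarith
  · apply Real.le_sqrt_of_sq_le
    rw [div_pow, div_le_div_iff₀ (by positivity) hD]
    have key := mul_nonneg hD.le (sq_diff_nonneg t h ht'.le)
    linarith
end

section
/- The polynomial h(t) = 9t^6 + 54t^5 + 55t^4 − 60t^3 − 93t^2 − 18t + 9 is negative for every real t with 1/3 < t < 8/7. -/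
theorem stmt_17 (t : ℝ) (ht : 1/3 < t) (ht' : t < 8/7) :
    9 * t ^ 6 + 54 * t ^ 5 + 55 * t ^ 4 - 60 * t ^ 3 - 93 * t ^ 2 - 18 * t + 9 < 0 := by
  have h0 : 0 < t := by linarith
  have h1 : 0 < 8/7 - t := by linarith
  have h2 : 0 < t - 1/3 := by linarith
  -- Replacing `9 t³ + 54 t² + 55 t` by its value at the right endpoint `8/7` leaves a cubic.
  have hA : 0 < t ^ 3 * (8/7 - t) *
      (9 * (t ^ 2 + 8/7 * t + (8/7) ^ 2) + 54 * (t + 8/7) + 55) := by positivity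
  -- That cubic lies below its secant through `1/3` and `8/7`, which is negative there.
  have hB : 0 < t * ((8/7 - t) * (t - 1/3)) := by positivity
  have hC : 0 < (8/7 - t) * (t - 1/3) := by positivity
  nlinarith [hA, hB, hC]
end
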